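/- With u = (1/3)a² − b and v = (2/9)a³ − ab − 3c, there exists a nonzero rational number C such that, in U(𝔤), modulo the left ideal U(𝔤)𝔫₊: (E₂₁⁵F₂₁^{10})_L(u·v) ≡ C·q(H), where q(H) = (2/27)H₂₁(H₂₁−1)(H₂₁−2)(H₂₁−3)(H₂₁−4) + (5/9)H₂₁(H₂₁−2)(H₂₁−3)(H₂₁−4) + (H₂₁−3)(H₂₁−4)H₀₁(H₀₁+2) + 2H₂₁(H₂₁−4)(H₁₁−1) + 2(H₂₁−4)H₁₀(H₁₀−1) − 6(H₂₁−4)H₀₁(H₀₁+1) + 6(H₂₁−3)H₀₁(H₀₁+2). -/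

import Mathlib

/-- The canonical embedding of a Lie algebra into its universal enveloping algebra. -/
noncomputable def ιU {L : Type*} [LieRing L] [LieAlgebra ℂ L] (x : L) :
    UniversalEnvelopingAlgebra ℂ L :=
  UniversalEnvelopingAlgebra.ι ℂ x

/-- The adjoint action `X_L : f ↦ Xf − fX` of `X ∈ L` on `U(L)`. -/
noncomputable def adU {L : Type*} [LieRing L] [LieAlgebra ℂ L] (x : L)
    (f : UniversalEnvelopingAlgebra ℂ L) : UniversalEnvelopingAlgebra ℂ L :=
  ιU x * f - f * ιU x

/-- A Lie algebra over `ℂ` equipped with Chevalley generators of type `G₂`: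
`E₁₀, F₁₀, H₁₀` correspond to the short simple root `α` and `E₀₁, F₀₁, H₀₁` to the long
simple root `β`, subject to the Chevalley relations and the Serre relations, and the
generators generate the Lie algebra.  (By Serre's theorem such a Lie algebra is a quotient of
the simple Lie algebra of type `G₂`.) -/
structure G2Gens (L : Type*) [LieRing L] [LieAlgebra ℂ L] where
  E10 : L
  E01 : L
  F10 : L
  F01 : L
  H10 : L
  H01 : L
  hH10H01 : ⁅H10, H01⁆ = 0
  hE10F10 : ⁅E10, F10⁆ = H10
  hE01F01 : ⁅E01, F01⁆ = H01
  hE10F01 : ⁅E10, F01⁆ = 0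
  hE01F10 : ⁅E01, F10⁆ = 0
  hH10E10 : ⁅H10, E10⁆ = (2 : ℂ) • E10
  hH01E01 : ⁅H01, E01⁆ = (2 : ℂ) • E01
  hH10E01 : ⁅H10, E01⁆ = (-3 : ℂ) • E01
  hH01E10 : ⁅H01, E10⁆ = (-1 : ℂ) • E10
  hH10F10 : ⁅H10, F10⁆ = (-2 : ℂ) • F10
  hH01F01 : ⁅H01, F01⁆ = (-2 : ℂ) • F01
  hH10F01 : ⁅H10, F01⁆ = (3 : ℂ) • F01
  hH01F10 : ⁅H01, F10⁆ = (1 : ℂ) • F10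
  serreE1 : ⁅E10, ⁅E10, ⁅E10, ⁅E10, E01⁆⁆⁆⁆ = 0
  serreE2 : ⁅E01, ⁅E01, E10⁆⁆ = 0
  serreF1 : ⁅F10, ⁅F10, ⁅F10, ⁅F10, F01⁆⁆⁆⁆ = 0
  serreF2 : ⁅F01, ⁅F01, F10⁆⁆ = 0
  generates : LieSubalgebra.lieSpan ℂ L {E10, E01, F10, F01, H10, H01} = ⊤

namespace G2Gens

variable {L : Type*} [LieRing L] [LieAlgebra ℂ L] (g : G2Gens L)

/-- The root vector `E₁₁ = [E₁₀, E₀₁]`. -/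
def E11 : L := ⁅g.E10, g.E01⁆
/-- The root vector `E₂₁ = (1/2)[E₁₁, E₁₀]`. -/
noncomputable def E21 : L := (2 : ℂ)⁻¹ • ⁅g.E11, g.E10⁆
/-- The root vector `E₃₁ = (1/3)[E₂₁, E₁₀]`. -/
noncomputable def E31 : L := (3 : ℂ)⁻¹ • ⁅g.E21, g.E10⁆
/-- The root vector `E₃₂ = [E₃₁, E₀₁]`. -/
noncomputable def E32 : L := ⁅g.E31, g.E01⁆
/-- The root vector `F₁₁ = [F₀₁, F₁₀]`. -/
def F11 : L := ⁅g.F01, g.F10⁆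
/-- The root vector `F₂₁ = (1/2)[F₁₀, F₁₁]`. -/
noncomputable def F21 : L := (2 : ℂ)⁻¹ • ⁅g.F10, g.F11⁆
/-- The root vector `F₃₁ = (1/3)[F₁₀, F₂₁]`. -/
noncomputable def F31 : L := (3 : ℂ)⁻¹ • ⁅g.F10, g.F21⁆
/-- The root vector `F₃₂ = [F₀₁, F₃₁]`. -/
noncomputable def F32 : L := ⁅g.F01, g.F31⁆
/-- The coroot `H₁₁ = H₁₀ + 3H₀₁`. -/
def H11 : L := g.H10 + (3 : ℂ) • g.H01
/-- The coroot `H₂₁ = 2H₁₀ + 3H₀₁`. -/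
def H21 : L := (2 : ℂ) • g.H10 + (3 : ℂ) • g.H01
/-- The coroot `H₃₁ = H₁₀ + H₀₁`. -/
def H31 : L := g.H10 + g.H01
/-- The coroot `H₃₂ = H₁₀ + 2H₀₁`. -/
def H32 : L := g.H10 + (2 : ℂ) • g.H01

/-- The element `a = E₂₁` of `U(𝔤)`. -/
noncomputable def aU : UniversalEnvelopingAlgebra ℂ L := ιU g.E21
/-- The element `b = E₃₁E₁₁ − E₃₂E₁₀` of `U(𝔤)`. -/
noncomputable def bU : UniversalEnvelopingAlgebra ℂ L :=
  ιU g.E31 * ιU g.E11 - ιU g.E32 * ιU g.E10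
/-- The element `c = E₃₁²E₀₁ − E₃₂E₃₁H₀₁ − E₃₂²F₀₁` of `U(𝔤)`. -/
noncomputable def cU : UniversalEnvelopingAlgebra ℂ L :=
  ιU g.E31 * ιU g.E31 * ιU g.E01 - ιU g.E32 * ιU g.E31 * ιU g.H01
    - ιU g.E32 * ιU g.E32 * ιU g.F01
/-- The element `u = (1/3)a² − b` of `U(𝔤)`. -/
noncomputable def uU : UniversalEnvelopingAlgebra ℂ L :=
  (3 : ℂ)⁻¹ • (g.aU * g.aU) - g.bU
/-- The element `v = (2/9)a³ − ab − 3c` of `U(𝔤)`. -/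
noncomputable def vU : UniversalEnvelopingAlgebra ℂ L :=
  ((2 : ℂ) / 9) • (g.aU * g.aU * g.aU) - g.aU * g.bU - (3 : ℂ) • g.cU

/-- `f ≡ h (mod U(𝔤)𝔫₊)`:  `f − h` lies in the left ideal of `U(𝔤)` generated by `E₁₀`
and `E₀₁`. -/
def EqModN (f h : UniversalEnvelopingAlgebra ℂ L) : Prop :=
  ∃ A B : UniversalEnvelopingAlgebra ℂ L, f - h = A * ιU g.E10 + B * ιU g.E01

end G2Gens

namespace G2Gens
section brackets
variable {L : Type*} [LieRing L] [LieAlgebra ℂ L]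

lemma jac {c : ℂ} {X Y Z : L} (h : X = c • ⁅Y, Z⁆) (x : L) :
    ⁅x, X⁆ = c • (⁅⁅x, Y⁆, Z⁆ + ⁅Y, ⁅x, Z⁆⁆) := by
  rw [h, lie_smul, leibniz_lie]

variable (g : G2Gens L)
lemma dE11 : g.E11 = (1 : ℂ) • ⁅g.E10, g.E01⁆ := (one_smul _ _).symm
lemma dE21 : g.E21 = (2 : ℂ)⁻¹ • ⁅g.E11, g.E10⁆ := rfl
lemma dE31 : g.E31 = (3 : ℂ)⁻¹ • ⁅g.E21, g.E10⁆ := rfl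
lemma dE32 : g.E32 = (1 : ℂ) • ⁅g.E31, g.E01⁆ := (one_smul _ _).symm
lemma dF11 : g.F11 = (1 : ℂ) • ⁅g.F01, g.F10⁆ := (one_smul _ _).symm
lemma dF21 : g.F21 = (2 : ℂ)⁻¹ • ⁅g.F10, g.F11⁆ := rfl
lemma dF31 : g.F31 = (3 : ℂ)⁻¹ • ⁅g.F10, g.F21⁆ := rfl
lemma dF32 : g.F32 = (1 : ℂ) • ⁅g.F01, g.F31⁆ := (one_smul _ _).symm

@[simp] lemma l_H10_H01 : ⁅g.H10, g.H01⁆ = 0 := by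
  simpa using g.hH10H01
@[simp] lemma l_H01_H10 : ⁅g.H01, g.H10⁆ = 0 := by
  rw [← lie_skew, l_H10_H01]; simp
@[simp] lemma l_E10_F10 : ⁅g.E10, g.F10⁆ = g.H10 := by
  simpa using g.hE10F10
@[simp] lemma l_F10_E10 : ⁅g.F10, g.E10⁆ = (-1 : ℂ) • g.H10 := by
  rw [← lie_skew, l_E10_F10]; module
@[simp] lemma l_E01_F01 : ⁅g.E01, g.F01⁆ = g.H01 := by
  simpa using g.hE01F01
@[simp] lemma l_F01_E01 : ⁅g.F01, g.E01⁆ = (-1 : ℂ) • g.H01 := by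
  rw [← lie_skew, l_E01_F01]; module
@[simp] lemma l_E10_F01 : ⁅g.E10, g.F01⁆ = 0 := by
  simpa using g.hE10F01
@[simp] lemma l_F01_E10 : ⁅g.F01, g.E10⁆ = 0 := by
  rw [← lie_skew, l_E10_F01]; simp
@[simp] lemma l_E01_F10 : ⁅g.E01, g.F10⁆ = 0 := by
  simpa using g.hE01F10
@[simp] lemma l_F10_E01 : ⁅g.F10, g.E01⁆ = 0 := by
  rw [← lie_skew, l_E01_F10]; simp
@[simp] lemma l_H10_E10 : ⁅g.H10, g.E10⁆ = (2 : ℂ) • g.E10 := by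
  simpa using g.hH10E10
@[simp] lemma l_E10_H10 : ⁅g.E10, g.H10⁆ = (-2 : ℂ) • g.E10 := by
  rw [← lie_skew, l_H10_E10]; module
@[simp] lemma l_H01_E01 : ⁅g.H01, g.E01⁆ = (2 : ℂ) • g.E01 := by
  simpa using g.hH01E01
@[simp] lemma l_E01_H01 : ⁅g.E01, g.H01⁆ = (-2 : ℂ) • g.E01 := by
  rw [← lie_skew, l_H01_E01]; module
@[simp] lemma l_H10_E01 : ⁅g.H10, g.E01⁆ = (-3 : ℂ) • g.E01 := by
  simpa using g.hH10E01
@[simp] lemma l_E01_H10 : ⁅g.E01, g.H10⁆ = (3 : ℂ) • g.E01 := by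
  rw [← lie_skew, l_H10_E01]; module
@[simp] lemma l_H01_E10 : ⁅g.H01, g.E10⁆ = (-1 : ℂ) • g.E10 := by
  simpa using g.hH01E10
@[simp] lemma l_E10_H01 : ⁅g.E10, g.H01⁆ = g.E10 := by
  rw [← lie_skew, l_H01_E10]; module
@[simp] lemma l_H10_F10 : ⁅g.H10, g.F10⁆ = (-2 : ℂ) • g.F10 := by
  simpa using g.hH10F10
@[simp] lemma l_F10_H10 : ⁅g.F10, g.H10⁆ = (2 : ℂ) • g.F10 := by
  rw [← lie_skew, l_H10_F10]; module
@[simp] lemma l_H01_F01 : ⁅g.H01, g.F01⁆ = (-2 : ℂ) • g.F01 := by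
  simpa using g.hH01F01
@[simp] lemma l_F01_H01 : ⁅g.F01, g.H01⁆ = (2 : ℂ) • g.F01 := by
  rw [← lie_skew, l_H01_F01]; module
@[simp] lemma l_H10_F01 : ⁅g.H10, g.F01⁆ = (3 : ℂ) • g.F01 := by
  simpa using g.hH10F01
@[simp] lemma l_F01_H10 : ⁅g.F01, g.H10⁆ = (-3 : ℂ) • g.F01 := by
  rw [← lie_skew, l_H10_F01]; module
@[simp] lemma l_H01_F10 : ⁅g.H01, g.F10⁆ = g.F10 := by
  simpa using g.hH01F10
@[simp] lemma l_F10_H01 : ⁅g.F10, g.H01⁆ = (-1 : ℂ) • g.F10 := by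
  rw [← lie_skew, l_H01_F10]; module
@[simp] lemma l_E10_E01 : ⁅g.E10, g.E01⁆ = g.E11 := by
  simp [E11]
@[simp] lemma l_E01_E10 : ⁅g.E01, g.E10⁆ = (-1 : ℂ) • g.E11 := by
  rw [← lie_skew, l_E10_E01]; module
@[simp] lemma l_E11_E10 : ⁅g.E11, g.E10⁆ = (2 : ℂ) • g.E21 := by
  simp [E21]
@[simp] lemma l_E10_E11 : ⁅g.E10, g.E11⁆ = (-2 : ℂ) • g.E21 := by
  rw [← lie_skew, l_E11_E10]; module
@[simp] lemma l_E21_E10 : ⁅g.E21, g.E10⁆ = (3 : ℂ) • g.E31 := by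
  simp [E31]
@[simp] lemma l_E10_E21 : ⁅g.E10, g.E21⁆ = (-3 : ℂ) • g.E31 := by
  rw [← lie_skew, l_E21_E10]; module
@[simp] lemma l_E31_E01 : ⁅g.E31, g.E01⁆ = g.E32 := by
  simp [E32]
@[simp] lemma l_E01_E31 : ⁅g.E01, g.E31⁆ = (-1 : ℂ) • g.E32 := by
  rw [← lie_skew, l_E31_E01]; module
@[simp] lemma l_F01_F10 : ⁅g.F01, g.F10⁆ = g.F11 := by
  simp [F11]
@[simp] lemma l_F10_F01 : ⁅g.F10, g.F01⁆ = (-1 : ℂ) • g.F11 := by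
  rw [← lie_skew, l_F01_F10]; module
@[simp] lemma l_F10_F11 : ⁅g.F10, g.F11⁆ = (2 : ℂ) • g.F21 := by
  simp [F21]
@[simp] lemma l_F11_F10 : ⁅g.F11, g.F10⁆ = (-2 : ℂ) • g.F21 := by
  rw [← lie_skew, l_F10_F11]; module
@[simp] lemma l_F10_F21 : ⁅g.F10, g.F21⁆ = (3 : ℂ) • g.F31 := by
  simp [F31]
@[simp] lemma l_F21_F10 : ⁅g.F21, g.F10⁆ = (-3 : ℂ) • g.F31 := by
  rw [← lie_skew, l_F10_F21]; module
@[simp] lemma l_F01_F31 : ⁅g.F01, g.F31⁆ = g.F32 := by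
  simp [F32]
@[simp] lemma l_F31_F01 : ⁅g.F31, g.F01⁆ = (-1 : ℂ) • g.F32 := by
  rw [← lie_skew, l_F01_F31]; module
@[simp] lemma l_H10_E11 : ⁅g.H10, g.E11⁆ = (-1 : ℂ) • g.E11 := by
  rw [jac g.dE11 g.H10]; simp; try module
@[simp] lemma l_E11_H10 : ⁅g.E11, g.H10⁆ = g.E11 := by
  rw [← lie_skew, l_H10_E11]; module
@[simp] lemma l_H01_E11 : ⁅g.H01, g.E11⁆ = g.E11 := by
  rw [jac g.dE11 g.H01]; simp; try module
@[simp] lemma l_E11_H01 : ⁅g.E11, g.H01⁆ = (-1 : ℂ) • g.E11 := by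
  rw [← lie_skew, l_H01_E11]; module
@[simp] lemma l_H10_E21 : ⁅g.H10, g.E21⁆ = g.E21 := by
  rw [jac g.dE21 g.H10]; simp; try module
@[simp] lemma l_E21_H10 : ⁅g.E21, g.H10⁆ = (-1 : ℂ) • g.E21 := by
  rw [← lie_skew, l_H10_E21]; module
@[simp] lemma l_H01_E21 : ⁅g.H01, g.E21⁆ = 0 := by
  rw [jac g.dE21 g.H01]; simp; try module
@[simp] lemma l_E21_H01 : ⁅g.E21, g.H01⁆ = 0 := by
  rw [← lie_skew, l_H01_E21]; simp
@[simp] lemma l_H10_E31 : ⁅g.H10, g.E31⁆ = (3 : ℂ) • g.E31 := by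
  rw [jac g.dE31 g.H10]; simp; try module
@[simp] lemma l_E31_H10 : ⁅g.E31, g.H10⁆ = (-3 : ℂ) • g.E31 := by
  rw [← lie_skew, l_H10_E31]; module
@[simp] lemma l_H01_E31 : ⁅g.H01, g.E31⁆ = (-1 : ℂ) • g.E31 := by
  rw [jac g.dE31 g.H01]; simp; try module
@[simp] lemma l_E31_H01 : ⁅g.E31, g.H01⁆ = g.E31 := by
  rw [← lie_skew, l_H01_E31]; module
@[simp] lemma l_H10_E32 : ⁅g.H10, g.E32⁆ = 0 := by
  rw [jac g.dE32 g.H10]; simp; try module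
@[simp] lemma l_E32_H10 : ⁅g.E32, g.H10⁆ = 0 := by
  rw [← lie_skew, l_H10_E32]; simp
@[simp] lemma l_H01_E32 : ⁅g.H01, g.E32⁆ = g.E32 := by
  rw [jac g.dE32 g.H01]; simp; try module
@[simp] lemma l_E32_H01 : ⁅g.E32, g.H01⁆ = (-1 : ℂ) • g.E32 := by
  rw [← lie_skew, l_H01_E32]; module
@[simp] lemma l_H10_F11 : ⁅g.H10, g.F11⁆ = g.F11 := by
  rw [jac g.dF11 g.H10]; simp; try module
@[simp] lemma l_F11_H10 : ⁅g.F11, g.H10⁆ = (-1 : ℂ) • g.F11 := by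
  rw [← lie_skew, l_H10_F11]; module
@[simp] lemma l_H01_F11 : ⁅g.H01, g.F11⁆ = (-1 : ℂ) • g.F11 := by
  rw [jac g.dF11 g.H01]; simp; try module
@[simp] lemma l_F11_H01 : ⁅g.F11, g.H01⁆ = g.F11 := by
  rw [← lie_skew, l_H01_F11]; module
@[simp] lemma l_H10_F21 : ⁅g.H10, g.F21⁆ = (-1 : ℂ) • g.F21 := by
  rw [jac g.dF21 g.H10]; simp; try module
@[simp] lemma l_F21_H10 : ⁅g.F21, g.H10⁆ = g.F21 := by
  rw [← lie_skew, l_H10_F21]; module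
@[simp] lemma l_H01_F21 : ⁅g.H01, g.F21⁆ = 0 := by
  rw [jac g.dF21 g.H01]; simp; try module
@[simp] lemma l_F21_H01 : ⁅g.F21, g.H01⁆ = 0 := by
  rw [← lie_skew, l_H01_F21]; simp
@[simp] lemma l_H10_F31 : ⁅g.H10, g.F31⁆ = (-3 : ℂ) • g.F31 := by
  rw [jac g.dF31 g.H10]; simp; try module
@[simp] lemma l_F31_H10 : ⁅g.F31, g.H10⁆ = (3 : ℂ) • g.F31 := by
  rw [← lie_skew, l_H10_F31]; module
@[simp] lemma l_H01_F31 : ⁅g.H01, g.F31⁆ = g.F31 := by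
  rw [jac g.dF31 g.H01]; simp; try module
@[simp] lemma l_F31_H01 : ⁅g.F31, g.H01⁆ = (-1 : ℂ) • g.F31 := by
  rw [← lie_skew, l_H01_F31]; module
@[simp] lemma l_H10_F32 : ⁅g.H10, g.F32⁆ = 0 := by
  rw [jac g.dF32 g.H10]; simp; try module
@[simp] lemma l_F32_H10 : ⁅g.F32, g.H10⁆ = 0 := by
  rw [← lie_skew, l_H10_F32]; simp
@[simp] lemma l_H01_F32 : ⁅g.H01, g.F32⁆ = (-1 : ℂ) • g.F32 := by
  rw [jac g.dF32 g.H01]; simp; try module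
@[simp] lemma l_F32_H01 : ⁅g.F32, g.H01⁆ = g.F32 := by
  rw [← lie_skew, l_H01_F32]; module
@[simp] lemma l_E11_E01 : ⁅g.E11, g.E01⁆ = 0 := by
  simpa using g.serreE2
@[simp] lemma l_E01_E11 : ⁅g.E01, g.E11⁆ = 0 := by
  rw [← lie_skew, l_E11_E01]; simp
@[simp] lemma l_E01_E21 : ⁅g.E01, g.E21⁆ = 0 := by
  rw [jac g.dE21 g.E01]; simp; try module
@[simp] lemma l_E21_E01 : ⁅g.E21, g.E01⁆ = 0 := by
  rw [← lie_skew, l_E01_E21]; simp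
@[simp] lemma l_E10_E31 : ⁅g.E10, g.E31⁆ = 0 := by
  have h := g.serreE1
  rw [← lie_skew g.E10 g.E01] at h
  simp at h
  simpa using h
@[simp] lemma l_E31_E10 : ⁅g.E31, g.E10⁆ = 0 := by
  rw [← lie_skew, l_E10_E31]; simp
@[simp] lemma l_E21_E11 : ⁅g.E21, g.E11⁆ = (3 : ℂ) • g.E32 := by
  have h := leibniz_lie g.E01 g.E10 g.E21
  simp at h
  linear_combination (norm := module) (-1 : ℂ) • h
@[simp] lemma l_E11_E21 : ⁅g.E11, g.E21⁆ = (-3 : ℂ) • g.E32 := by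
  rw [← lie_skew, l_E21_E11]; module
@[simp] lemma l_E11_E31 : ⁅g.E11, g.E31⁆ = 0 := by
  have h := leibniz_lie g.E10 g.E11 g.E21
  have h2 : ⁅g.E10, g.E32⁆ = _ := jac g.dE32 g.E10
  simp at h h2
  have h3 := h.symm.trans h2
  rw [← lie_skew g.E31 g.E11] at h3
  linear_combination (norm := module) (2⁻¹ : ℂ) • h3
@[simp] lemma l_E31_E11 : ⁅g.E31, g.E11⁆ = 0 := by
  rw [← lie_skew, l_E11_E31]; simp
@[simp] lemma l_E10_E32 : ⁅g.E10, g.E32⁆ = 0 := by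
  rw [jac g.dE32 g.E10]; simp; try module
@[simp] lemma l_E32_E10 : ⁅g.E32, g.E10⁆ = 0 := by
  rw [← lie_skew, l_E10_E32]; simp
@[simp] lemma l_E21_E31 : ⁅g.E21, g.E31⁆ = 0 := by
  have h := leibniz_lie g.E10 g.E11 g.E31
  simpa using h
@[simp] lemma l_E31_E21 : ⁅g.E31, g.E21⁆ = 0 := by
  rw [← lie_skew, l_E21_E31]; simp
@[simp] lemma l_E21_E32 : ⁅g.E21, g.E32⁆ = 0 := by
  rw [jac g.dE32 g.E21]; simp; try module
@[simp] lemma l_E32_E21 : ⁅g.E32, g.E21⁆ = 0 := by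
  rw [← lie_skew, l_E21_E32]; simp
@[simp] lemma l_F01_F11 : ⁅g.F01, g.F11⁆ = 0 := by
  simpa using g.serreF2
@[simp] lemma l_F11_F01 : ⁅g.F11, g.F01⁆ = 0 := by
  rw [← lie_skew, l_F01_F11]; simp
@[simp] lemma l_F01_F21 : ⁅g.F01, g.F21⁆ = 0 := by
  rw [jac g.dF21 g.F01]; simp; try module
@[simp] lemma l_F21_F01 : ⁅g.F21, g.F01⁆ = 0 := by
  rw [← lie_skew, l_F01_F21]; simp
@[simp] lemma l_F10_F31 : ⁅g.F10, g.F31⁆ = 0 := by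
  have h := g.serreF1
  rw [← lie_skew g.F10 g.F01] at h
  simp at h
  simpa using h
@[simp] lemma l_F31_F10 : ⁅g.F31, g.F10⁆ = 0 := by
  rw [← lie_skew, l_F10_F31]; simp
@[simp] lemma l_F11_F21 : ⁅g.F11, g.F21⁆ = (3 : ℂ) • g.F32 := by
  have h := leibniz_lie g.F01 g.F10 g.F21
  simp at h
  linear_combination (norm := module) (-1 : ℂ) • h
@[simp] lemma l_F21_F11 : ⁅g.F21, g.F11⁆ = (-3 : ℂ) • g.F32 := by
  rw [← lie_skew, l_F11_F21]; module
@[simp] lemma l_F11_F31 : ⁅g.F11, g.F31⁆ = 0 := by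
  have h := leibniz_lie g.F10 g.F11 g.F21
  have h2 : ⁅g.F10, g.F32⁆ = _ := jac g.dF32 g.F10
  simp at h h2
  have h3 := h.symm.trans h2
  rw [← lie_skew g.F31 g.F11] at h3
  linear_combination (norm := module) (2⁻¹ : ℂ) • h3
@[simp] lemma l_F31_F11 : ⁅g.F31, g.F11⁆ = 0 := by
  rw [← lie_skew, l_F11_F31]; simp
@[simp] lemma l_F10_F32 : ⁅g.F10, g.F32⁆ = 0 := by
  rw [jac g.dF32 g.F10]; simp; try module
@[simp] lemma l_F32_F10 : ⁅g.F32, g.F10⁆ = 0 := by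
  rw [← lie_skew, l_F10_F32]; simp
@[simp] lemma l_F21_F31 : ⁅g.F21, g.F31⁆ = 0 := by
  have h := leibniz_lie g.F10 g.F11 g.F31
  simpa using h.symm
@[simp] lemma l_F31_F21 : ⁅g.F31, g.F21⁆ = 0 := by
  rw [← lie_skew, l_F21_F31]; simp
@[simp] lemma l_F21_F32 : ⁅g.F21, g.F32⁆ = 0 := by
  rw [jac g.dF32 g.F21]; simp; try module
@[simp] lemma l_F32_F21 : ⁅g.F32, g.F21⁆ = 0 := by
  rw [← lie_skew, l_F21_F32]; simp
@[simp] lemma l_E10_F11 : ⁅g.E10, g.F11⁆ = (-3 : ℂ) • g.F01 := by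
  rw [jac g.dF11 g.E10]; simp; try module
@[simp] lemma l_F11_E10 : ⁅g.F11, g.E10⁆ = (3 : ℂ) • g.F01 := by
  rw [← lie_skew, l_E10_F11]; module
@[simp] lemma l_E01_F11 : ⁅g.E01, g.F11⁆ = g.F10 := by
  rw [jac g.dF11 g.E01]; simp; try module
@[simp] lemma l_F11_E01 : ⁅g.F11, g.E01⁆ = (-1 : ℂ) • g.F10 := by
  rw [← lie_skew, l_E01_F11]; module
@[simp] lemma l_E10_F21 : ⁅g.E10, g.F21⁆ = (2 : ℂ) • g.F11 := by
  rw [jac g.dF21 g.E10]; simp; try module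
@[simp] lemma l_F21_E10 : ⁅g.F21, g.E10⁆ = (-2 : ℂ) • g.F11 := by
  rw [← lie_skew, l_E10_F21]; module
@[simp] lemma l_E01_F21 : ⁅g.E01, g.F21⁆ = 0 := by
  rw [jac g.dF21 g.E01]; simp; try module
@[simp] lemma l_F21_E01 : ⁅g.F21, g.E01⁆ = 0 := by
  rw [← lie_skew, l_E01_F21]; simp
@[simp] lemma l_E10_F31 : ⁅g.E10, g.F31⁆ = g.F21 := by
  rw [jac g.dF31 g.E10]; simp; try module
@[simp] lemma l_F31_E10 : ⁅g.F31, g.E10⁆ = (-1 : ℂ) • g.F21 := by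
  rw [← lie_skew, l_E10_F31]; module
@[simp] lemma l_E01_F31 : ⁅g.E01, g.F31⁆ = 0 := by
  rw [jac g.dF31 g.E01]; simp; try module
@[simp] lemma l_F31_E01 : ⁅g.F31, g.E01⁆ = 0 := by
  rw [← lie_skew, l_E01_F31]; simp
@[simp] lemma l_E10_F32 : ⁅g.E10, g.F32⁆ = 0 := by
  rw [jac g.dF32 g.E10]; simp; try module
@[simp] lemma l_F32_E10 : ⁅g.F32, g.E10⁆ = 0 := by
  rw [← lie_skew, l_E10_F32]; simp
@[simp] lemma l_E01_F32 : ⁅g.E01, g.F32⁆ = g.F31 := by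
  rw [jac g.dF32 g.E01]; simp; try module
@[simp] lemma l_F32_E01 : ⁅g.F32, g.E01⁆ = (-1 : ℂ) • g.F31 := by
  rw [← lie_skew, l_E01_F32]; module
@[simp] lemma l_F10_E11 : ⁅g.F10, g.E11⁆ = (3 : ℂ) • g.E01 := by
  rw [jac g.dE11 g.F10]; simp; try module
@[simp] lemma l_E11_F10 : ⁅g.E11, g.F10⁆ = (-3 : ℂ) • g.E01 := by
  rw [← lie_skew, l_F10_E11]; module
@[simp] lemma l_F01_E11 : ⁅g.F01, g.E11⁆ = (-1 : ℂ) • g.E10 := by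
  rw [jac g.dE11 g.F01]; simp; try module
@[simp] lemma l_E11_F01 : ⁅g.E11, g.F01⁆ = g.E10 := by
  rw [← lie_skew, l_F01_E11]; module
@[simp] lemma l_F10_E21 : ⁅g.F10, g.E21⁆ = (-2 : ℂ) • g.E11 := by
  rw [jac g.dE21 g.F10]; simp; try module
@[simp] lemma l_E21_F10 : ⁅g.E21, g.F10⁆ = (2 : ℂ) • g.E11 := by
  rw [← lie_skew, l_F10_E21]; module
@[simp] lemma l_F01_E21 : ⁅g.F01, g.E21⁆ = 0 := by
  rw [jac g.dE21 g.F01]; simp; try module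
@[simp] lemma l_E21_F01 : ⁅g.E21, g.F01⁆ = 0 := by
  rw [← lie_skew, l_F01_E21]; simp
@[simp] lemma l_F10_E31 : ⁅g.F10, g.E31⁆ = (-1 : ℂ) • g.E21 := by
  rw [jac g.dE31 g.F10]; simp; try module
@[simp] lemma l_E31_F10 : ⁅g.E31, g.F10⁆ = g.E21 := by
  rw [← lie_skew, l_F10_E31]; module
@[simp] lemma l_F01_E31 : ⁅g.F01, g.E31⁆ = 0 := by
  rw [jac g.dE31 g.F01]; simp; try module
@[simp] lemma l_E31_F01 : ⁅g.E31, g.F01⁆ = 0 := by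
  rw [← lie_skew, l_F01_E31]; simp
@[simp] lemma l_F10_E32 : ⁅g.F10, g.E32⁆ = 0 := by
  rw [jac g.dE32 g.F10]; simp; try module
@[simp] lemma l_E32_F10 : ⁅g.E32, g.F10⁆ = 0 := by
  rw [← lie_skew, l_F10_E32]; simp
@[simp] lemma l_F01_E32 : ⁅g.F01, g.E32⁆ = (-1 : ℂ) • g.E31 := by
  rw [jac g.dE32 g.F01]; simp; try module
@[simp] lemma l_E32_F01 : ⁅g.E32, g.F01⁆ = g.E31 := by
  rw [← lie_skew, l_F01_E32]; module
@[simp] lemma l_E11_F11 : ⁅g.E11, g.F11⁆ = g.H10 + (3 : ℂ) • g.H01 := by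
  rw [jac g.dF11 g.E11]; simp; try module
@[simp] lemma l_F11_E11 : ⁅g.F11, g.E11⁆ = (-1 : ℂ) • g.H10 + (-3 : ℂ) • g.H01 := by
  rw [← lie_skew, l_E11_F11]; module
@[simp] lemma l_E21_F11 : ⁅g.E21, g.F11⁆ = (-2 : ℂ) • g.E10 := by
  rw [jac g.dF11 g.E21]; simp; try module
@[simp] lemma l_F11_E21 : ⁅g.F11, g.E21⁆ = (2 : ℂ) • g.E10 := by
  rw [← lie_skew, l_E21_F11]; module
@[simp] lemma l_E31_F11 : ⁅g.E31, g.F11⁆ = 0 := by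
  rw [jac g.dF11 g.E31]; simp; try module
@[simp] lemma l_F11_E31 : ⁅g.F11, g.E31⁆ = 0 := by
  rw [← lie_skew, l_E31_F11]; simp
@[simp] lemma l_E32_F11 : ⁅g.E32, g.F11⁆ = g.E21 := by
  rw [jac g.dF11 g.E32]; simp; try module
@[simp] lemma l_F11_E32 : ⁅g.F11, g.E32⁆ = (-1 : ℂ) • g.E21 := by
  rw [← lie_skew, l_E32_F11]; module
@[simp] lemma l_E11_F21 : ⁅g.E11, g.F21⁆ = (-2 : ℂ) • g.F10 := by
  rw [jac g.dF21 g.E11]; simp; try module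
@[simp] lemma l_F21_E11 : ⁅g.F21, g.E11⁆ = (2 : ℂ) • g.F10 := by
  rw [← lie_skew, l_E11_F21]; module
@[simp] lemma l_E21_F21 : ⁅g.E21, g.F21⁆ = (2 : ℂ) • g.H10 + (3 : ℂ) • g.H01 := by
  rw [jac g.dF21 g.E21]; simp; try module
@[simp] lemma l_F21_E21 : ⁅g.F21, g.E21⁆ = (-2 : ℂ) • g.H10 + (-3 : ℂ) • g.H01 := by
  rw [← lie_skew, l_E21_F21]; module
@[simp] lemma l_E31_F21 : ⁅g.E31, g.F21⁆ = (-1 : ℂ) • g.E10 := by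
  rw [jac g.dF21 g.E31]; simp; try module
@[simp] lemma l_F21_E31 : ⁅g.F21, g.E31⁆ = g.E10 := by
  rw [← lie_skew, l_E31_F21]; module
@[simp] lemma l_E32_F21 : ⁅g.E32, g.F21⁆ = (-1 : ℂ) • g.E11 := by
  rw [jac g.dF21 g.E32]; simp; try module
@[simp] lemma l_F21_E32 : ⁅g.F21, g.E32⁆ = g.E11 := by
  rw [← lie_skew, l_E32_F21]; module
@[simp] lemma l_E11_F31 : ⁅g.E11, g.F31⁆ = 0 := by
  rw [jac g.dF31 g.E11]; simp; try module
@[simp] lemma l_F31_E11 : ⁅g.F31, g.E11⁆ = 0 := by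
  rw [← lie_skew, l_E11_F31]; simp
@[simp] lemma l_E21_F31 : ⁅g.E21, g.F31⁆ = (-1 : ℂ) • g.F10 := by
  rw [jac g.dF31 g.E21]; simp; try module
@[simp] lemma l_F31_E21 : ⁅g.F31, g.E21⁆ = g.F10 := by
  rw [← lie_skew, l_E21_F31]; module
@[simp] lemma l_E31_F31 : ⁅g.E31, g.F31⁆ = g.H10 + g.H01 := by
  rw [jac g.dF31 g.E31]; simp; try module
@[simp] lemma l_F31_E31 : ⁅g.F31, g.E31⁆ = (-1 : ℂ) • g.H10 + (-1 : ℂ) • g.H01 := by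
  rw [← lie_skew, l_E31_F31]; module
@[simp] lemma l_E32_F31 : ⁅g.E32, g.F31⁆ = (-1 : ℂ) • g.E01 := by
  rw [jac g.dF31 g.E32]; simp; try module
@[simp] lemma l_F31_E32 : ⁅g.F31, g.E32⁆ = g.E01 := by
  rw [← lie_skew, l_E32_F31]; module
@[simp] lemma l_E11_F32 : ⁅g.E11, g.F32⁆ = g.F21 := by
  rw [jac g.dF32 g.E11]; simp; try module
@[simp] lemma l_F32_E11 : ⁅g.F32, g.E11⁆ = (-1 : ℂ) • g.F21 := by
  rw [← lie_skew, l_E11_F32]; module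
@[simp] lemma l_E21_F32 : ⁅g.E21, g.F32⁆ = (-1 : ℂ) • g.F11 := by
  rw [jac g.dF32 g.E21]; simp; try module
@[simp] lemma l_F32_E21 : ⁅g.F32, g.E21⁆ = g.F11 := by
  rw [← lie_skew, l_E21_F32]; module
@[simp] lemma l_E31_F32 : ⁅g.E31, g.F32⁆ = (-1 : ℂ) • g.F01 := by
  rw [jac g.dF32 g.E31]; simp; try module
@[simp] lemma l_F32_E31 : ⁅g.F32, g.E31⁆ = g.F01 := by
  rw [← lie_skew, l_E31_F32]; module
@[simp] lemma l_E32_F32 : ⁅g.E32, g.F32⁆ = g.H10 + (2 : ℂ) • g.H01 := by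
  rw [jac g.dF32 g.E32]; simp; try module
@[simp] lemma l_F32_E32 : ⁅g.F32, g.E32⁆ = (-1 : ℂ) • g.H10 + (-2 : ℂ) • g.H01 := by
  rw [← lie_skew, l_E32_F32]; module
end brackets

section chains
set_option linter.unusedSimpArgs false
variable {L : Type*} [LieRing L] [LieAlgebra ℂ L]

lemma ιU_add (x y : L) : ιU (x + y) = ιU x + ιU y := map_add (UniversalEnvelopingAlgebra.ι ℂ) x y
lemma ιU_smul (c : ℂ) (x : L) : ιU (c • x) = c • ιU x :=
  map_smul (UniversalEnvelopingAlgebra.ι ℂ) c x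
lemma ιU_neg (x : L) : ιU (-x) = -ιU x := map_neg (UniversalEnvelopingAlgebra.ι ℂ) x
lemma ιU_zero : ιU (0 : L) = 0 := map_zero (UniversalEnvelopingAlgebra.ι ℂ)
section
attribute [local instance] LieRing.ofAssociativeRing
lemma ιU_lie (x y : L) : ιU ⁅x, y⁆ = ιU x * ιU y - ιU y * ιU x :=
  LieHom.map_lie (UniversalEnvelopingAlgebra.ι ℂ) x y
end

lemma adU_add (x : L) (f h) : adU x (f + h) = adU x f + adU x h := by
  simp only [adU]; noncomm_ring
lemma adU_sub (x : L) (f h) : adU x (f - h) = adU x f - adU x h := by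
  simp only [adU]; noncomm_ring
lemma adU_neg (x : L) (f) : adU x (-f) = -adU x f := by
  simp only [adU]; noncomm_ring
lemma adU_zero (x : L) : adU x 0 = 0 := by simp [adU]
lemma adU_mul (x : L) (f h) : adU x (f * h) = adU x f * h + f * adU x h := by
  simp only [adU]; noncomm_ring
lemma adU_smul (x : L) (c : ℂ) (f) : adU x (c • f) = c • adU x f := by
  simp only [adU, mul_smul_comm, smul_mul_assoc, smul_sub]
lemma adU_ι (x y : L) : adU x (ιU y) = ιU ⁅x, y⁆ := by rw [ιU_lie]; rfl
lemma adU_sum {ι : Type*} (x : L) (s : Finset ι) (f : ι → UniversalEnvelopingAlgebra ℂ L) :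
    adU x (∑ i ∈ s, f i) = ∑ i ∈ s, adU x (f i) := by
  simp only [adU, Finset.mul_sum, Finset.sum_mul, Finset.sum_sub_distrib]

/-- A sequence of elements of `U(𝔤)` on which `E` and `F` act by the standard formulas of the
`(n+1)`-dimensional representation of `sl₂`, in divided power normalisation. -/
structure IsChain (E F : L) (n : ℕ) (x : ℕ → UniversalEnvelopingAlgebra ℂ L) : Prop where
  up : ∀ k : ℕ, adU E (x k) = ((k : ℂ) + 1) • x (k + 1)
  dn : ∀ k : ℕ, adU F (x (k + 1)) = ((n : ℂ) - k) • x k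
  dn0 : adU F (x 0) = 0

/-- Convolution product of sequences. -/
noncomputable def conv (x y : ℕ → UniversalEnvelopingAlgebra ℂ L) (n : ℕ) :
    UniversalEnvelopingAlgebra ℂ L :=
  ∑ p ∈ Finset.HasAntidiagonal.antidiagonal n, x p.1 * y p.2

namespace IsChain
variable {E F : L} {n m : ℕ} {x y : ℕ → UniversalEnvelopingAlgebra ℂ L}

lemma smul (hx : IsChain E F n x) (c : ℂ) : IsChain E F n (fun k => c • x k) where
  up k := by rw [adU_smul, hx.up, smul_comm]
  dn k := by rw [adU_smul, hx.dn, smul_comm]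
  dn0 := by rw [adU_smul, hx.dn0, smul_zero]

lemma add (hx : IsChain E F n x) (hy : IsChain E F n y) :
    IsChain E F n (fun k => x k + y k) where
  up k := by rw [adU_add, hx.up, hy.up, smul_add]
  dn k := by rw [adU_add, hx.dn, hy.dn, smul_add]
  dn0 := by rw [adU_add, hx.dn0, hy.dn0, add_zero]

lemma mul_const (hx : IsChain E F n x) {e : UniversalEnvelopingAlgebra ℂ L}
    (hE : adU E e = 0) (hF : adU F e = 0) : IsChain E F n (fun k => x k * e) where
  up k := by rw [adU_mul, hx.up, hE, mul_zero, add_zero, smul_mul_assoc]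
  dn k := by rw [adU_mul, hx.dn, hF, mul_zero, add_zero, smul_mul_assoc]
  dn0 := by rw [adU_mul, hx.dn0, hF, mul_zero, zero_mul, add_zero]

lemma conv (hx : IsChain E F n x) (hy : IsChain E F m y) :
    IsChain E F (n + m) (conv x y) where
  up k := by
    have key : ((k : ℂ) + 1) • G2Gens.conv x y (k + 1)
        = ∑ p ∈ Finset.HasAntidiagonal.antidiagonal (k + 1), (p.1 : ℂ) • (x p.1 * y p.2)
          + ∑ p ∈ Finset.HasAntidiagonal.antidiagonal (k + 1), (p.2 : ℂ) • (x p.1 * y p.2) := by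
      rw [G2Gens.conv, Finset.smul_sum, ← Finset.sum_add_distrib]
      refine Finset.sum_congr rfl fun p hp => ?_
      rw [← add_smul]
      have := Finset.HasAntidiagonal.mem_antidiagonal.1 hp
      congr 1
      exact_mod_cast this.symm
    rw [key, Finset.Nat.sum_antidiagonal_succ, Finset.Nat.sum_antidiagonal_succ', G2Gens.conv,
      adU_sum]
    simp only [adU_mul, hx.up, hy.up, Finset.sum_add_distrib, smul_mul_assoc, mul_smul_comm]
    simp
  dn k := by
    have h1 : G2Gens.conv x y (k + 1) = ∑ p ∈ Finset.HasAntidiagonal.antidiagonal (k + 1), x p.1 * y p.2 := rfl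
    rw [h1, adU_sum]
    simp only [adU_mul, Finset.sum_add_distrib]
    rw [Finset.Nat.sum_antidiagonal_succ, Finset.Nat.sum_antidiagonal_succ', G2Gens.conv]
    simp only [hx.dn, hy.dn, hx.dn0, hy.dn0, zero_mul, mul_zero, zero_add, add_zero,
      smul_mul_assoc, mul_smul_comm]
    rw [← Finset.sum_add_distrib, Finset.smul_sum]
    refine Finset.sum_congr rfl fun p hp => ?_
    rw [← add_smul]
    have h2 : (p.1 : ℂ) + p.2 = k := by exact_mod_cast Finset.HasAntidiagonal.mem_antidiagonal.1 hp
    congr 1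
    push_cast
    linear_combination -h2
  dn0 := by
    simp [G2Gens.conv, adU_mul, hx.dn0, hy.dn0]

lemma iter_dn (hx : IsChain E F n x) (k : ℕ) (hk : k ≤ n) :
    (adU F)^[k] (x n) = (k.factorial : ℂ) • x (n - k) := by
  induction k with
  | zero => simp
  | succ k ih =>
    rw [Function.iterate_succ_apply', ih (by omega), adU_smul]
    obtain ⟨j, rfl⟩ : ∃ j, n = j + 1 + k := ⟨n - 1 - k, by omega⟩
    have e1 : j + 1 + k - k = j + 1 := by omega
    have e2 : j + 1 + k - (k + 1) = j := by omega
    rw [e1, e2, hx.dn, smul_smul, Nat.factorial_succ]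
    congr 1
    push_cast
    ring

lemma iter_up (hx : IsChain E F n x) (k : ℕ) :
    (adU E)^[k] (x 0) = (k.factorial : ℂ) • x k := by
  induction k with
  | zero => simp
  | succ k ih =>
    rw [Function.iterate_succ_apply', ih, adU_smul, hx.up, smul_smul, Nat.factorial_succ]
    congr 1
    push_cast
    ring

end IsChain

lemma iter_smul (x : L) (c : ℂ) (f : UniversalEnvelopingAlgebra ℂ L) (k : ℕ) :
    (adU x)^[k] (c • f) = c • (adU x)^[k] f := by
  induction k with
  | zero => rfl
  | succ k ih => rw [Function.iterate_succ_apply', ih, adU_smul, Function.iterate_succ_apply']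

variable (g : G2Gens L)

/-- The three-dimensional chain of `E₂₁`. -/
noncomputable def cA : ℕ → UniversalEnvelopingAlgebra ℂ L
  | 0 => ιU g.F21
  | 1 => ιU g.H21
  | 2 => -ιU g.E21
  | _ => 0

/-- The four-dimensional chain of `E₃₁`. -/
noncomputable def cX : ℕ → UniversalEnvelopingAlgebra ℂ L
  | 0 => ιU g.F32
  | 1 => -ιU g.F11
  | 2 => ιU g.E10
  | 3 => ιU g.E31
  | _ => 0

/-- The four-dimensional chain of `E₃₂`. -/
noncomputable def cY : ℕ → UniversalEnvelopingAlgebra ℂ L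
  | 0 => -ιU g.F31
  | 1 => ιU g.F10
  | 2 => ιU g.E11
  | 3 => ιU g.E32
  | _ => 0

/-- The five-dimensional chain of `b`. -/
noncomputable def cB : ℕ → UniversalEnvelopingAlgebra ℂ L
  | 0 => g.cX 1 * g.cY 0 - g.cX 0 * g.cY 1
  | 1 => (2 : ℂ) • (g.cX 2 * g.cY 0) - (2 : ℂ) • (g.cX 0 * g.cY 2)
  | 2 => (3 : ℂ) • (g.cX 3 * g.cY 0) + g.cX 2 * g.cY 1 - g.cX 1 * g.cY 2
          - (3 : ℂ) • (g.cX 0 * g.cY 3)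
  | 3 => (2 : ℂ) • (g.cX 3 * g.cY 1) - (2 : ℂ) • (g.cX 1 * g.cY 3)
  | 4 => g.cX 3 * g.cY 2 - g.cX 2 * g.cY 3
  | _ => 0

/-- The seven-dimensional chain of `c`. -/
noncomputable def cC (k : ℕ) : UniversalEnvelopingAlgebra ℂ L :=
  conv g.cX g.cX k * ιU g.E01 + (-1 : ℂ) • (conv g.cY g.cX k * ιU g.H01)
    + (-1 : ℂ) • (conv g.cY g.cY k * ιU g.F01)

/-- The chain of `u`. -/
noncomputable def cU' (k : ℕ) : UniversalEnvelopingAlgebra ℂ L :=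
  (3 : ℂ)⁻¹ • conv g.cA g.cA k + (-1 : ℂ) • g.cB k

/-- The chain of `v`. -/
noncomputable def cV (k : ℕ) : UniversalEnvelopingAlgebra ℂ L :=
  (-2 / 9 : ℂ) • conv (conv g.cA g.cA) g.cA k + conv g.cA g.cB k + (-3 : ℂ) • g.cC k

lemma chainA : IsChain g.E21 g.F21 2 g.cA where
  up
    | 0 => by simp [cA, adU_ι, H21]
    | 1 => by simp [cA, adU_ι, H21, adU_add, adU_smul, ιU_zero, ιU_add, ιU_smul, ιU_neg]; try module
    | 2 => by simp [cA, adU_ι, adU_neg, ιU_zero]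
    | k + 3 => by simp [cA, adU_zero]
  dn
    | 0 => by simp [cA, adU_ι, H21, adU_add, adU_smul, ιU_zero, ιU_add, ιU_smul, ιU_neg]; try module
    | 1 => by simp [cA, adU_ι, adU_neg, H21, ιU_add, ιU_smul, ιU_neg]; try module
    | 2 => by simp [cA, adU_zero]
    | k + 3 => by simp [cA, adU_zero]
  dn0 := by simp [cA, adU_ι, ιU_zero]

lemma chainX : IsChain g.E21 g.F21 3 g.cX where
  up
    | 0 => by simp [cX, adU_ι, ιU_smul, ιU_neg]
    | 1 => by simp [cX, adU_ι, adU_neg, ιU_smul, ιU_neg]; try module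
    | 2 => by simp [cX, adU_ι, ιU_smul]; try module
    | 3 => by simp [cX, adU_ι, ιU_zero]
    | k + 4 => by simp [cX, adU_zero]
  dn
    | 0 => by simp [cX, adU_ι, adU_neg, ιU_smul, ιU_neg]
    | 1 => by simp [cX, adU_ι, ιU_smul, ιU_neg]; try module
    | 2 => by simp [cX, adU_ι, ιU_smul]; try module
    | 3 => by simp [cX, adU_zero]
    | k + 4 => by simp [cX, adU_zero]
  dn0 := by simp [cX, adU_ι, ιU_zero]

lemma chainY : IsChain g.E21 g.F21 3 g.cY where
  up
    | 0 => by simp [cY, adU_ι, adU_neg, ιU_smul, ιU_neg]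
    | 1 => by simp [cY, adU_ι, ιU_smul, ιU_neg]; try module
    | 2 => by simp [cY, adU_ι, ιU_smul]; try module
    | 3 => by simp [cY, adU_ι, ιU_zero]
    | k + 4 => by simp [cY, adU_zero]
  dn
    | 0 => by simp [cY, adU_ι, ιU_smul, ιU_neg]
    | 1 => by simp [cY, adU_ι, ιU_smul, ιU_neg]; try module
    | 2 => by simp [cY, adU_ι, ιU_smul]; try module
    | 3 => by simp [cY, adU_zero]
    | k + 4 => by simp [cY, adU_zero]
  dn0 := by simp [cY, adU_ι, adU_neg, ιU_zero]

lemma chainB : IsChain g.E21 g.F21 4 g.cB := by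
  have xu := g.chainX.up
  have xd := g.chainX.dn
  have x0 := g.chainX.dn0
  have yu := g.chainY.up
  have yd := g.chainY.dn
  have y0 := g.chainY.dn0
  have xd0 := xd 0
  have xd1 := xd 1
  have xd2 := xd 2
  have yd0 := yd 0
  have yd1 := yd 1
  have yd2 := yd 2
  have x4 : g.cX 4 = 0 := rfl
  have y4 : g.cY 4 = 0 := rfl
  norm_num at xd0 xd1 xd2 yd0 yd1 yd2
  constructor
  · rintro (_ | _ | _ | _ | _ | k)
    all_goals
      simp only [cB, adU_sub, adU_add, adU_mul, adU_smul, adU_zero, xu, x4, y4, yu,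
        smul_mul_assoc, mul_smul_comm, zero_mul, mul_zero, zero_add, smul_zero, add_zero,
        sub_zero, Nat.reduceAdd]
      try push_cast
      try module
  · rintro (_ | _ | _ | _ | _ | k)
    all_goals
      simp only [cB, adU_sub, adU_add, adU_mul, adU_smul, adU_zero, x0, y0, xd0, xd1, xd2,
        yd0, yd1, yd2,
        smul_mul_assoc, mul_smul_comm, zero_mul, mul_zero, zero_add, smul_zero, add_zero,
        sub_zero, Nat.reduceAdd]
      try push_cast
      try module
  · simp only [cB, adU_sub, adU_mul, x0, y0, xd0, yd0, smul_mul_assoc, mul_smul_comm, zero_mul,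
      mul_zero, zero_add, add_zero]
    module

lemma chainC : IsChain g.E21 g.F21 6 g.cC := by
  refine ((IsChain.mul_const (g.chainX.conv g.chainX) ?_ ?_).add
    ((IsChain.mul_const (g.chainY.conv g.chainX) ?_ ?_).smul (-1))).add
    ((IsChain.mul_const (g.chainY.conv g.chainY) ?_ ?_).smul (-1))
  all_goals simp [adU_ι, ιU_zero]

lemma chainU : IsChain g.E21 g.F21 4 g.cU' :=
  ((g.chainA.conv g.chainA).smul _).add (g.chainB.smul _)

lemma chainV : IsChain g.E21 g.F21 6 g.cV :=
  ((((g.chainA.conv g.chainA).conv g.chainA).smul _).add (g.chainA.conv g.chainB)).add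
    (g.chainC.smul _)

lemma uU_eq : g.uU = g.cU' 4 := by
  have h : ιU g.E32 * ιU g.E10 = ιU g.E10 * ιU g.E32 := by
    have := ιU_lie g.E32 g.E10
    rw [l_E32_E10, ιU_zero] at this
    exact (sub_eq_zero.1 this.symm)
  simp [uU, cU', conv, Finset.Nat.antidiagonal_succ, cA, cB, cX, cY, aU, bU, h]
  try module

lemma vU_eq : g.vU = g.cV 6 := by
  have h : ιU g.E32 * ιU g.E10 = ιU g.E10 * ιU g.E32 := by
    have := ιU_lie g.E32 g.E10
    rw [l_E32_E10, ιU_zero] at this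
    exact (sub_eq_zero.1 this.symm)
  simp [vU, cV, cC, conv, Finset.Nat.antidiagonal_succ, cA, cB, cX, cY, aU, bU, cU, h]
  try module

lemma conv_zero {x y : ℕ → UniversalEnvelopingAlgebra ℂ L} {n m : ℕ} (hx : ∀ k, n < k → x k = 0)
    (hy : ∀ k, m < k → y k = 0) (k : ℕ) (hk : n + m < k) : conv x y k = 0 := by
  refine Finset.sum_eq_zero fun p hp => ?_
  have h := Finset.HasAntidiagonal.mem_antidiagonal.1 hp
  rcases lt_or_ge n p.1 with h1 | h1
  · rw [hx _ h1, zero_mul]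
  · rw [hy _ (by omega), mul_zero]

lemma cA_zero : ∀ k, 2 < k → g.cA k = 0
  | 0, h | 1, h | 2, h => absurd h (by norm_num)
  | _ + 3, _ => rfl

lemma cX_zero : ∀ k, 3 < k → g.cX k = 0
  | 0, h | 1, h | 2, h | 3, h => absurd h (by norm_num)
  | _ + 4, _ => rfl

lemma cY_zero : ∀ k, 3 < k → g.cY k = 0
  | 0, h | 1, h | 2, h | 3, h => absurd h (by norm_num)
  | _ + 4, _ => rfl

lemma cB_zero : ∀ k, 4 < k → g.cB k = 0
  | 0, h | 1, h | 2, h | 3, h | 4, h => absurd h (by norm_num)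
  | _ + 5, _ => rfl

lemma uv_eq : g.uU * g.vU = conv g.cU' g.cV 10 := by
  rw [uU_eq, vU_eq]
  have hU : ∀ k, g.cU' (k + 5) = 0 := by
    intro k
    rw [cU', conv_zero g.cA_zero g.cA_zero _ (by omega), g.cB_zero _ (by omega)]
    simp
  have hV : ∀ k, g.cV (k + 7) = 0 := by
    intro k
    rw [cV, cC, conv_zero (conv_zero g.cA_zero g.cA_zero) g.cA_zero _ (by omega),
      conv_zero g.cA_zero g.cB_zero _ (by omega), conv_zero g.cX_zero g.cX_zero _ (by omega),
      conv_zero g.cY_zero g.cX_zero _ (by omega), conv_zero g.cY_zero g.cY_zero _ (by omega)]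
    simp
  simp [conv, Finset.Nat.antidiagonal_succ, hU 0, hU 1, hU 2, hU 3, hU 4, hU 5,
    hV 0, hV 1, hV 2, hV 3]

lemma main_iter : (adU g.E21)^[5] ((adU g.F21)^[10] (g.uU * g.vU))
    = (435456000 : ℂ) • conv g.cU' g.cV 5 := by
  have h := g.chainU.conv g.chainV
  rw [uv_eq, h.iter_dn 10 (by norm_num), iter_smul, h.iter_up, smul_smul]
  norm_num [Nat.factorial]

end chains

section evaluation
set_option linter.unusedSimpArgs false
variable {L : Type*} [LieRing L] [LieAlgebra ℂ L] {V : Type*} [AddCommGroup V] [Module ℂ V]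
  (T : UniversalEnvelopingAlgebra ℂ L →ₐ[ℂ] Module.End ℂ V)

lemma swap (x y : L) (m : V) :
    T (ιU x) (T (ιU y) m) = T (ιU y) (T (ιU x) m) + T (ιU ⁅x, y⁆) m := by
  rw [ιU_lie, map_sub, map_mul, map_mul]
  simp

variable (g : G2Gens L)

/-- `w` is annihilated by all positive root vectors. -/
structure IsHighest (w : V) : Prop where
  e10 : T (ιU g.E10) w = 0
  e01 : T (ιU g.E01) w = 0
  e11 : T (ιU g.E11) w = 0
  e21 : T (ιU g.E21) w = 0
  e31 : T (ιU g.E31) w = 0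
  e32 : T (ιU g.E32) w = 0

lemma isHighest {w : V} (h10 : T (ιU g.E10) w = 0) (h01 : T (ιU g.E01) w = 0) :
    IsHighest T g w := by
  have key : ∀ {x y : L}, T (ιU x) w = 0 → T (ιU y) w = 0 → T (ιU ⁅x, y⁆) w = 0 := by
    intro x y hx hy
    have := swap T x y w
    rw [hx, hy, map_zero, map_zero, zero_add] at this
    exact this.symm
  have h11 : T (ιU g.E11) w = 0 := key h10 h01
  have h21 : T (ιU g.E21) w = 0 := by
    rw [E21, ιU_smul, map_smul, LinearMap.smul_apply, key h11 h10, smul_zero]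
  have h31 : T (ιU g.E31) w = 0 := by
    rw [E31, ιU_smul, map_smul, LinearMap.smul_apply, key h21 h10, smul_zero]
  exact ⟨h10, h01, h11, h21, h31, key h31 h01⟩

set_option maxHeartbeats 8000000 in
lemma cV_apply {w : V} (h : IsHighest T g w) :
    T (g.cV 5) w = 0
    ∧ T (g.cV 4) w = 0
    ∧ T (g.cV 3) w = (-4/3 : ℂ) • T (ιU g.H10) (T (ιU g.H10) w)
      + (-4 : ℂ) • T (ιU g.H10) (T (ιU g.H01) w)
      + (28/9 : ℂ) • T (ιU g.H10) w
      + (-4/3 : ℂ) • T (ιU g.H01) w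
      + (-6 : ℂ) • T (ιU g.H01) (T (ιU g.H01) w)
      + (-16/9 : ℂ) • T (ιU g.H10) (T (ιU g.H10) (T (ιU g.H10) w))
      + (-8 : ℂ) • T (ιU g.H10) (T (ιU g.H10) (T (ιU g.H01) w))
      + (-12 : ℂ) • T (ιU g.H10) (T (ιU g.H01) (T (ιU g.H01) w))
      + (-6 : ℂ) • T (ιU g.H01) (T (ιU g.H01) (T (ιU g.H01) w))
    ∧ T (g.cV 2) w = (-2 : ℂ) • T (ιU g.F21) (T (ιU g.H10) w)
      + (-6 : ℂ) • T (ιU g.F21) (T (ιU g.H01) w)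
      + (-4/3 : ℂ) • T (ιU g.F21) w
      + (-8/3 : ℂ) • T (ιU g.F21) (T (ιU g.H10) (T (ιU g.H10) w))
      + (-8 : ℂ) • T (ιU g.F21) (T (ιU g.H10) (T (ιU g.H01) w))
      + (-6 : ℂ) • T (ιU g.F21) (T (ιU g.H01) (T (ιU g.H01) w))
      + (-6 : ℂ) • T (ιU g.F11) (T (ιU g.F10) w)
      + (-3 : ℂ) • T (ιU g.F11) (T (ιU g.F10) (T (ιU g.H01) w))
      + (3 : ℂ) • T (ιU g.F01) (T (ιU g.F10) (T (ιU g.F10) w))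
    ∧ T (g.cV 1) w = (-4/3 : ℂ) • T (ιU g.F21) (T (ιU g.F21) (T (ιU g.H10) w))
      + (-2/3 : ℂ) • T (ιU g.F21) (T (ιU g.F21) w)
      + (-2 : ℂ) • T (ιU g.F21) (T (ιU g.F21) (T (ιU g.H01) w))
      + (-2 : ℂ) • T (ιU g.F32) (T (ιU g.F10) (T (ιU g.H10) w))
      + (4 : ℂ) • T (ιU g.F32) (T (ιU g.F10) w)
      + (2 : ℂ) • T (ιU g.F31) (T (ιU g.F11) (T (ιU g.H10) w))
      + (2 : ℂ) • T (ιU g.F31) (T (ιU g.F11) w)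
      + (6 : ℂ) • T (ιU g.F31) (T (ιU g.F11) (T (ιU g.H01) w))
      + (-6 : ℂ) • T (ιU g.F31) (T (ιU g.F01) (T (ιU g.F10) w)) := by
  refine ⟨?_, ?_, ?_, ?_, ?_⟩
  all_goals
    simp [cV, cC, conv, Finset.Nat.antidiagonal_succ, cA, cB, cX, cY,
      H21, ιU_add, ιU_smul, ιU_neg, ιU_zero, h.e10, h.e01, h.e11, h.e21, h.e31, h.e32,
      swap T g.H10 g.F32, swap T g.H01 g.F32, swap T g.H10 g.F31, swap T g.H01 g.F31,
      swap T g.H10 g.F21, swap T g.H01 g.F21, swap T g.H10 g.F11, swap T g.H01 g.F11,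
      swap T g.H10 g.F01, swap T g.H01 g.F01, swap T g.H10 g.F10, swap T g.H01 g.F10,
      swap T g.E32 g.F32, swap T g.E32 g.F31, swap T g.E32 g.F21, swap T g.E32 g.F11,
      swap T g.E32 g.F01, swap T g.E32 g.F10, swap T g.E32 g.H10, swap T g.E32 g.H01,
      swap T g.E31 g.F32, swap T g.E31 g.F31, swap T g.E31 g.F21, swap T g.E31 g.F11,
      swap T g.E31 g.F01, swap T g.E31 g.F10, swap T g.E31 g.H10, swap T g.E31 g.H01,
      swap T g.E21 g.F32, swap T g.E21 g.F31, swap T g.E21 g.F21, swap T g.E21 g.F11,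
      swap T g.E21 g.F01, swap T g.E21 g.F10, swap T g.E21 g.H10, swap T g.E21 g.H01,
      swap T g.E11 g.F32, swap T g.E11 g.F31, swap T g.E11 g.F21, swap T g.E11 g.F11,
      swap T g.E11 g.F01, swap T g.E11 g.F10, swap T g.E11 g.H10, swap T g.E11 g.H01,
      swap T g.E01 g.F32, swap T g.E01 g.F31, swap T g.E01 g.F21, swap T g.E01 g.F11,
      swap T g.E01 g.F01, swap T g.E01 g.F10, swap T g.E01 g.H10, swap T g.E01 g.H01,
      swap T g.E10 g.F32, swap T g.E10 g.F31, swap T g.E10 g.F21, swap T g.E10 g.F11,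
      swap T g.E10 g.F01, swap T g.E10 g.F10, swap T g.E10 g.H10, swap T g.E10 g.H01,
      swap T g.H01 g.H10, swap T g.F10 g.F11, swap T g.F10 g.F01, swap T g.F11 g.F31,
      swap T g.F10 g.F32, swap T g.F11 g.F21, swap T g.F10 g.F21, swap T g.F01 g.F31,
      swap T g.F21 g.F31, swap T g.F10 g.F31, swap T g.F01 g.F11]
    try module
  
set_option maxHeartbeats 8000000 in
lemma total_apply {w : V} (h : IsHighest T g w) :
    T (conv g.cU' g.cV 5) w = T ((-1 : ℂ) • (((2 : ℂ) / 27) • (ιU g.H21 * (ιU g.H21 - 1) * (ιU g.H21 - 2)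
              * (ιU g.H21 - 3) * (ιU g.H21 - 4))
            + ((5 : ℂ) / 9) • (ιU g.H21 * (ιU g.H21 - 2) * (ιU g.H21 - 3) * (ιU g.H21 - 4))
            + (ιU g.H21 - 3) * (ιU g.H21 - 4) * (ιU g.H01 * (ιU g.H01 + 2))
            + (2 : ℂ) • (ιU g.H21 * (ιU g.H21 - 4) * (ιU g.H11 - 1))
            + (2 : ℂ) • ((ιU g.H21 - 4) * (ιU g.H10 * (ιU g.H10 - 1)))
            - (6 : ℂ) • ((ιU g.H21 - 4) * (ιU g.H01 * (ιU g.H01 + 1)))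
            + (6 : ℂ) • ((ιU g.H21 - 3) * (ιU g.H01 * (ιU g.H01 + 2))))) w := by
  have e : conv g.cU' g.cV 5 = g.cU' 0 * g.cV 5 + g.cU' 1 * g.cV 4 + g.cU' 2 * g.cV 3
      + g.cU' 3 * g.cV 2 + g.cU' 4 * g.cV 1 := by
    have h5 : g.cU' 5 = 0 := by
      rw [cU', conv_zero g.cA_zero g.cA_zero _ (by omega), g.cB_zero _ (by omega)]
      simp
    simp [conv, Finset.Nat.antidiagonal_succ, h5, add_assoc]
  obtain ⟨v5, v4, v3, v2, v1⟩ := cV_apply T g h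
  rw [e]
  simp only [map_add, map_mul, LinearMap.add_apply, Module.End.mul_apply, v1, v2, v3, v4, v5, map_zero, zero_add]
  have n2 : (2 : UniversalEnvelopingAlgebra ℂ L) = (2 : ℂ) • 1 := by
    rw [Algebra.smul_def, mul_one]; exact (map_ofNat _ _).symm
  have n3 : (3 : UniversalEnvelopingAlgebra ℂ L) = (3 : ℂ) • 1 := by
    rw [Algebra.smul_def, mul_one]; exact (map_ofNat _ _).symm
  have n4 : (4 : UniversalEnvelopingAlgebra ℂ L) = (4 : ℂ) • 1 := by
    rw [Algebra.smul_def, mul_one]; exact (map_ofNat _ _).symm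
  rw [n2, n3, n4]
  simp [cU', H11, mul_add, mul_sub, add_mul, sub_mul, conv, Finset.Nat.antidiagonal_succ, cA, cB, cX, cY,
    H21, ιU_add, ιU_smul, ιU_neg, ιU_zero, h.e10, h.e01, h.e11, h.e21, h.e31, h.e32,
    swap T g.H10 g.F32, swap T g.H01 g.F32, swap T g.H10 g.F31, swap T g.H01 g.F31,
    swap T g.H10 g.F21, swap T g.H01 g.F21, swap T g.H10 g.F11, swap T g.H01 g.F11,
    swap T g.H10 g.F01, swap T g.H01 g.F01, swap T g.H10 g.F10, swap T g.H01 g.F10,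
    swap T g.E32 g.F32, swap T g.E32 g.F31, swap T g.E32 g.F21, swap T g.E32 g.F11,
    swap T g.E32 g.F01, swap T g.E32 g.F10, swap T g.E32 g.H10, swap T g.E32 g.H01,
    swap T g.E31 g.F32, swap T g.E31 g.F31, swap T g.E31 g.F21, swap T g.E31 g.F11,
    swap T g.E31 g.F01, swap T g.E31 g.F10, swap T g.E31 g.H10, swap T g.E31 g.H01,
    swap T g.E21 g.F32, swap T g.E21 g.F31, swap T g.E21 g.F21, swap T g.E21 g.F11,
    swap T g.E21 g.F01, swap T g.E21 g.F10, swap T g.E21 g.H10, swap T g.E21 g.H01,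
    swap T g.E11 g.F32, swap T g.E11 g.F31, swap T g.E11 g.F21, swap T g.E11 g.F11,
    swap T g.E11 g.F01, swap T g.E11 g.F10, swap T g.E11 g.H10, swap T g.E11 g.H01,
    swap T g.E01 g.F32, swap T g.E01 g.F31, swap T g.E01 g.F21, swap T g.E01 g.F11,
    swap T g.E01 g.F01, swap T g.E01 g.F10, swap T g.E01 g.H10, swap T g.E01 g.H01,
    swap T g.E10 g.F32, swap T g.E10 g.F31, swap T g.E10 g.F21, swap T g.E10 g.F11,
    swap T g.E10 g.F01, swap T g.E10 g.F10, swap T g.E10 g.H10, swap T g.E10 g.H01,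
    swap T g.H01 g.H10, swap T g.F10 g.F11, swap T g.F10 g.F01, swap T g.F11 g.F31,
    swap T g.F10 g.F32, swap T g.F11 g.F21, swap T g.F10 g.F21, swap T g.F01 g.F31,
    swap T g.F21 g.F31, swap T g.F10 g.F31, swap T g.F01 g.F11]
  try module

end evaluation
end G2Gens

/-- **Lemma 3.5, proved part (lem-third-case).**  With `u = (1/3)a² − b` and
`v = (2/9)a³ − ab − 3c`, the polynomial `q(H)` of Lemma 3.5 arises, up to a nonzero rational
constant, from `u·v` (the image under Zhu's map of the singular vector of `N(−2/3, 0)` of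
type `G₂⁽¹⁾`) modulo `U(𝔤)𝔫₊`. -/
theorem G2Gens.level_minus_two_thirds_polynomial
    {L : Type*} [LieRing L] [LieAlgebra ℂ L] (g : G2Gens L) :
    ∃ C : ℚ, C ≠ 0 ∧
      g.EqModN ((adU g.E21)^[5] ((adU g.F21)^[10] (g.uU * g.vU)))
        ((C : ℂ) •
          (((2 : ℂ) / 27) • (ιU g.H21 * (ιU g.H21 - 1) * (ιU g.H21 - 2)
              * (ιU g.H21 - 3) * (ιU g.H21 - 4))
            + ((5 : ℂ) / 9) • (ιU g.H21 * (ιU g.H21 - 2) * (ιU g.H21 - 3) * (ιU g.H21 - 4))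
            + (ιU g.H21 - 3) * (ιU g.H21 - 4) * (ιU g.H01 * (ιU g.H01 + 2))
            + (2 : ℂ) • (ιU g.H21 * (ιU g.H21 - 4) * (ιU g.H11 - 1))
            + (2 : ℂ) • ((ιU g.H21 - 4) * (ιU g.H10 * (ιU g.H10 - 1)))
            - (6 : ℂ) • ((ιU g.H21 - 4) * (ιU g.H01 * (ιU g.H01 + 1)))
            + (6 : ℂ) • ((ιU g.H21 - 3) * (ιU g.H01 * (ιU g.H01 + 2))))) := by
  refine ⟨-435456000, by norm_num, ?_⟩
  let I : Submodule (UniversalEnvelopingAlgebra ℂ L) (UniversalEnvelopingAlgebra ℂ L) :=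
    Submodule.span _ {ιU g.E10, ιU g.E01}
  let T : UniversalEnvelopingAlgebra ℂ L →ₐ[ℂ]
      Module.End ℂ (UniversalEnvelopingAlgebra ℂ L ⧸ I) := Algebra.lsmul ℂ ℂ _
  have hT : ∀ f, T f (I.mkQ 1) = I.mkQ f := by
    intro f
    change f • I.mkQ 1 = I.mkQ f
    rw [← map_smul, smul_eq_mul, mul_one]
  have h10 : T (ιU g.E10) (I.mkQ 1) = 0 := by
    rw [hT, Submodule.mkQ_apply, Submodule.Quotient.mk_eq_zero]
    exact Submodule.subset_span (by simp)
  have h01 : T (ιU g.E01) (I.mkQ 1) = 0 := by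
    rw [hT, Submodule.mkQ_apply, Submodule.Quotient.mk_eq_zero]
    exact Submodule.subset_span (by simp)
  have key := G2Gens.total_apply T g (G2Gens.isHighest T g h10 h01)
  rw [hT, hT, Submodule.mkQ_apply, Submodule.mkQ_apply, Submodule.Quotient.eq] at key
  have key2 := (I.restrictScalars ℂ).smul_mem (435456000 : ℂ) key
  rw [Submodule.restrictScalars_mem, Submodule.mem_span_pair] at key2
  obtain ⟨A, B, hAB⟩ := key2
  refine ⟨A, B, ?_⟩
  rw [smul_eq_mul, smul_eq_mul] at hAB
  rw [hAB, G2Gens.main_iter, smul_sub, smul_smul]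
  norm_num
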